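/- Let f, g : X → Y be maps of simplicial sets. If f and g are strongly homotopic, then the induced maps of pseudo-compact dg algebras f*, g* : C*(Y) → C*(X) on normalized cochains are strongly homotopic. Consequently, if two simplicial sets X and Y are strongly homotopy equivalent, then the pseudo-compact dg algebras C*(X) and C*(Y) are strongly homotopy equivalent. -/

import Mathlib

open DirectSum

/-- A (cohomologically graded) differential graded algebra over a commutative ring `k`:
a `ℤ`-graded `k`-algebra equipped with a square-zero degree `+1` differential
satisfying the graded Leibniz rule. -/
structure DGA (k : Type) [CommRing k] : Type 1 where
  A : Type
  [ringA : Ring A]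
  [algA : Algebra k A]
  gr : ℤ → Submodule k A
  [gradedA : GradedRing gr]
  d : A →ₗ[k] A
  d_sq : ∀ a, d (d a) = 0
  d_mem : ∀ (i : ℤ), ∀ a ∈ gr i, d a ∈ gr (i + 1)
  leibniz : ∀ (i : ℤ), ∀ a ∈ gr i, ∀ b, d (a * b) = d a * b + (((-1 : ℤˣ) ^ i : ℤˣ) : ℤ) • (a * d b)

attribute [instance] DGA.ringA DGA.algA DGA.gradedA

namespace DGA

variable {k : Type} [CommRing k]

/-- A Maurer-Cartan element of a dg algebra: a degree `1` element `x` with `d x + x² = 0`. -/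
def IsMC (A : DGA k) (x : A.A) : Prop := x ∈ A.gr 1 ∧ A.d x + x * x = 0

/-- The set of Maurer-Cartan elements of `A`. -/
def MCEl (A : DGA k) : Type := {x : A.A // A.IsMC x}

/-- The gauge action of an invertible element `g` on `x`:  `g·x = g x g⁻¹ - (d g) g⁻¹`. -/
def GaugeAct (A : DGA k) (g : (A.A)ˣ) (x : A.A) : A.A :=
  (g : A.A) * x * ((g⁻¹ : (A.A)ˣ) : A.A) - A.d (g : A.A) * ((g⁻¹ : (A.A)ˣ) : A.A)

/-- Gauge equivalence of elements of a dg algebra: `y = g·x` for some invertible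
degree-zero `g`. -/
def GaugeEquiv (A : DGA k) (x y : A.A) : Prop :=
  ∃ g : (A.A)ˣ, (g : A.A) ∈ A.gr 0 ∧ y = A.GaugeAct g x

/-- The Maurer-Cartan moduli set: Maurer-Cartan elements modulo gauge equivalence. -/
def MCmod (A : DGA k) : Type := Quot (fun x y : A.MCEl => A.GaugeEquiv x.1 y.1)

/-- `a` is cohomologous to `1` in the twisted algebra `A^x` (with differential `d + [x,-]`);
here `a` has degree `0` so the twisted differential of the degree `-1` element `s`
is `d s + x s + s x`. -/
def CohomologousToOne (A : DGA k) (x a : A.A) : Prop :=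
  ∃ s ∈ A.gr (-1 : ℤ), a - 1 = A.d s + (x * s + s * x)

/-- Homotopy gauge equivalence of Maurer-Cartan elements: the one-sided twisted modules
`A^{[x]}` and `A^{[y]}` are homotopy equivalent as right dg `A`-modules, explicitly:
there are degree-zero `g`, `h` intertwining the twisted differentials whose composites
are cohomologous to `1` in `A^x`, resp. `A^y`. -/
def HomotopyGaugeEquiv (A : DGA k) (x y : A.A) : Prop :=
  ∃ g ∈ A.gr 0, ∃ h ∈ A.gr 0,
    A.d g + y * g - g * x = 0 ∧
    A.d h + x * h - h * y = 0 ∧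
    A.CohomologousToOne x (h * g) ∧
    A.CohomologousToOne y (g * h)

/-- The Maurer-Cartan homotopy moduli set: MC elements modulo homotopy gauge
equivalence. -/
def MChmod (A : DGA k) : Type := Quot (fun x y : A.MCEl => A.HomotopyGaugeEquiv x.1 y.1)

open scoped Classical in
/-- The parity (Koszul sign) operator of a graded algebra: `a ↦ Σᵢ (-1)ⁱ aᵢ`. -/
noncomputable def parity (A : DGA k) (a : A.A) : A.A :=
  (DirectSum.decompose A.gr a).sum (fun i x => (((-1 : ℤˣ) ^ i : ℤˣ) : ℤ) • (x : A.A))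

end DGA

/-- A morphism of dg algebras: an algebra map preserving the grading and the differential. -/
structure DGAHom {k : Type} [CommRing k] (A B : DGA k) where
  toFun : A.A →ₐ[k] B.A
  map_gr : ∀ (i : ℤ), ∀ a ∈ A.gr i, toFun a ∈ B.gr i
  map_d : ∀ a, toFun (A.d a) = B.d (toFun a)

namespace DGAHom
variable {k : Type} [CommRing k]

def comp {A B C : DGA k} (g : DGAHom B C) (f : DGAHom A B) : DGAHom A C where
  toFun := g.toFun.comp f.toFun
  map_gr := fun i a ha => g.map_gr i _ (f.map_gr i a ha)
  map_d := fun a => by simp [f.map_d, g.map_d]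

def id' (A : DGA k) : DGAHom A A :=
  ⟨AlgHom.id k A.A, fun _ _ h => h, fun _ => rfl⟩

end DGAHom


/-! ## Topological simplices and singular simplices -/

/-- The standard topological `n`-simplex. -/
def TopSimplex (n : ℕ) : Type :=
  {f : Fin (n + 1) → ℝ // (∀ i, 0 ≤ f i) ∧ ∑ i, f i = 1}

instance (n : ℕ) : TopologicalSpace (TopSimplex n) :=
  inferInstanceAs (TopologicalSpace {f : Fin (n + 1) → ℝ // (∀ i, 0 ≤ f i) ∧ ∑ i, f i = 1})

/-- The affine map of topological simplices induced by a map of vertices. -/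
def vertAffine {m n : ℕ} (v : Fin (m + 1) → Fin (n + 1)) :
    C(TopSimplex m, TopSimplex n) where
  toFun f := ⟨fun j => ∑ i ∈ Finset.univ.filter (fun i => v i = j), f.1 i,
    ⟨fun j => Finset.sum_nonneg fun i _ => f.2.1 i, by
      rw [Finset.sum_fiberwise_of_maps_to (fun i _ => Finset.mem_univ (v i)) f.1]
      exact f.2.2⟩⟩
  continuous_toFun := by
    apply Continuous.subtype_mk
    exact continuous_pi fun j => continuous_finset_sum _ fun i _ =>
      (continuous_apply i).comp continuous_subtype_val

/-- The `i`-th face inclusion of topological simplices. -/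
def faceMap {n : ℕ} (i : Fin (n + 2)) : C(TopSimplex n, TopSimplex (n + 1)) :=
  vertAffine fun j => i.succAbove j

/-- The `i`-th degeneracy (collapse) map of topological simplices. -/
def degenMap {n : ℕ} (i : Fin (n + 1)) : C(TopSimplex (n + 1), TopSimplex n) :=
  vertAffine fun j => i.predAbove j

/-- The inclusion of the front `p`-face of the `n`-simplex. -/
def frontMap (p n : ℕ) (h : p ≤ n) : C(TopSimplex p, TopSimplex n) :=
  vertAffine fun j => Fin.castLE (by omega) j

/-- The inclusion of the back `q`-face of the `n`-simplex. -/
def backMap (q n : ℕ) (h : q ≤ n) : C(TopSimplex q, TopSimplex n) :=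
  vertAffine fun j : Fin (q + 1) => (⟨n - q + (j : ℕ), by have := j.isLt; omega⟩ : Fin (n + 1))

/-- The `j`-th vertex of the topological `n`-simplex. -/
def vertexPt (n : ℕ) (j : Fin (n + 1)) : TopSimplex n :=
  ⟨fun i => if i = j then 1 else 0,
    ⟨fun i => by dsimp only; split <;> norm_num, by simp⟩⟩

/-- The set of singular `n`-simplices of a topological space. -/
def SingN (X : Type) [TopologicalSpace X] (n : ℕ) : Type := C(TopSimplex n, X)

/-- A singular `(n+1)`-simplex is degenerate if it factors through a degeneracy map. -/
def IsDegenSimplex {X : Type} [TopologicalSpace X] {n : ℕ} (σ : SingN X (n + 1)) : Prop :=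
  ∃ (i : Fin (n + 1)) (τ : SingN X n), σ = (τ : C(TopSimplex n, X)).comp (degenMap i)

/-- The constant singular `0`-simplex of `[0,1]` at `0`. -/
def const0 : SingN unitInterval 0 := ContinuousMap.const _ 0

/-- The constant singular `0`-simplex of `[0,1]` at `1`. -/
def const1 : SingN unitInterval 0 := ContinuousMap.const _ 1

/-! ## Strong homotopy of dg algebra morphisms -/

/-- An elementary strong homotopy between two dg algebra maps `f, g : A → B`: a dg
algebra map `H : A → B ⊗ I*` (where `I*` is the normalized singular cochain algebra of
`[0,1]`, the tensor product being completed) restricting to `f` and `g` at the two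
endpoints.  `B ⊗ I*` is identified with normalized `B`-valued singular cochains on
`[0,1]`, so `H` is given by its components `H a n σ ∈ B^{i-n}` for `a ∈ A^i` and `σ` a
singular `n`-simplex; multiplicativity is the Alexander-Whitney convolution formula
with Koszul signs, and compatibility with differentials uses the singular coboundary. -/
def IsElemStrongHomotopy {k : Type} [CommRing k] (A B : DGA k) (f g : A.A → B.A)
    (H : A.A → ∀ n, SingN unitInterval n → B.A) : Prop :=
  (∀ a b n σ, H (a + b) n σ = H a n σ + H b n σ) ∧
  (∀ (c : k) a n σ, H (c • a) n σ = c • H a n σ) ∧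
  (∀ a (n : ℕ) (i : Fin (n + 1)) (τ : SingN unitInterval n),
    H a (n + 1) (ContinuousMap.comp τ (degenMap i)) = 0) ∧
  (∀ (i : ℤ), ∀ a ∈ A.gr i, ∀ (n : ℕ) σ, H a n σ ∈ B.gr (i - (n : ℤ))) ∧
  (∀ σ, H 1 0 σ = 1) ∧ (∀ (n : ℕ) σ, H 1 (n + 1) σ = 0) ∧
  (∀ (i j : ℤ), ∀ a ∈ A.gr i, ∀ b ∈ A.gr j, ∀ (n : ℕ) (σ : SingN unitInterval n),
    H (a * b) n σ =
      ∑ p : Fin (n + 1),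
        (((-1 : ℤˣ) ^ (((p : ℕ) : ℤ) * (j - ((n : ℤ) - ((p : ℕ) : ℤ)))) : ℤˣ) : ℤ) •
          (H a (p : ℕ) (ContinuousMap.comp σ (frontMap (p : ℕ) n (Nat.le_of_lt_succ p.isLt))) *
            H b (n - (p : ℕ)) (ContinuousMap.comp σ (backMap (n - (p : ℕ)) n (by omega))))) ∧
  (∀ (i : ℤ), ∀ a ∈ A.gr i,
    (∀ σ : SingN unitInterval 0, H (A.d a) 0 σ = B.d (H a 0 σ)) ∧
    (∀ (n : ℕ) (σ : SingN unitInterval (n + 1)),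
      H (A.d a) (n + 1) σ =
        B.d (H a (n + 1) σ) +
          (((-1 : ℤˣ) ^ (i - (n : ℤ)) : ℤˣ) : ℤ) •
            ∑ i' : Fin (n + 2), (((-1 : ℤˣ) ^ (i' : ℕ) : ℤˣ) : ℤ) •
              H a n (ContinuousMap.comp σ (faceMap i')))) ∧
  (∀ a, H a 0 const0 = f a ∧ H a 0 const1 = g a)

/-- Two dg algebra morphisms are strongly homotopic if they are related by the
equivalence relation generated by elementary strong homotopies. -/
def StronglyHomotopicHoms {k : Type} [CommRing k] (A B : DGA k) :
    DGAHom A B → DGAHom A B → Prop :=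
  Relation.EqvGen (fun f g => ∃ H, IsElemStrongHomotopy A B f.toFun g.toFun H)

/-- Two dg algebras are strongly homotopy equivalent if there are dg algebra maps in
both directions whose composites are strongly homotopic to the identities. -/
def StronglyHomotopyEquivalent {k : Type} [CommRing k] (A B : DGA k) : Prop :=
  ∃ (f : DGAHom A B) (g : DGAHom B A),
    StronglyHomotopicHoms B B (f.comp g) (DGAHom.id' B) ∧
    StronglyHomotopicHoms A A (g.comp f) (DGAHom.id' A)

/-! ## Simplicial sets: products, cylinders and strong homotopy -/

open CategoryTheory Simplicial

/-- The objectwise product of two simplicial sets. -/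
def sprod (X Y : SSet) : SSet where
  obj m := X.obj m × Y.obj m
  map f := ↾(fun p => (X.map f p.1, Y.map f p.2))
  map_id := by
    intro m
    apply ConcreteCategory.hom_ext
    intro p
    exact Prod.ext (X.map_id_apply m p.1) (Y.map_id_apply m p.2)
  map_comp := by
    intro a b c f g
    apply ConcreteCategory.hom_ext
    intro p
    exact Prod.ext (X.map_comp_apply f g p.1) (Y.map_comp_apply f g p.2)

/-- The singular simplicial set of the interval `[0,1]`. -/
noncomputable def Iset : SSet := TopCat.toSSet.obj (TopCat.of unitInterval)

/-- The constant simplex of the singular simplicial set of `[0,1]` at a point `c`. -/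
noncomputable def constSimp (c : unitInterval) (m : SimplexCategoryᵒᵖ) : Iset.obj m :=
  ULift.up (TopCat.ofHom (ContinuousMap.const _ c :
    C((SimplexCategory.toTop.obj m.unop : TopCat), (TopCat.of unitInterval : TopCat))))

/-- The inclusion `X → X × I` at the `0`-end of the cylinder. -/
noncomputable def cylIncl0 (X : SSet) : X ⟶ sprod X Iset where
  app m := ↾(fun x => (x, constSimp 0 m))
  naturality := by
    intro a b f
    apply ConcreteCategory.hom_ext
    intro x
    refine Prod.ext rfl ?_
    show Iset.map f (constSimp 0 a) = constSimp 0 b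
    rfl

/-- The inclusion `X → X × I` at the `1`-end of the cylinder. -/
noncomputable def cylIncl1 (X : SSet) : X ⟶ sprod X Iset where
  app m := ↾(fun x => (x, constSimp 1 m))
  naturality := by
    intro a b f
    apply ConcreteCategory.hom_ext
    intro x
    refine Prod.ext rfl ?_
    show Iset.map f (constSimp 1 a) = constSimp 1 b
    rfl

/-- An elementary strong homotopy between two maps of simplicial sets: a map from the
very good cylinder `X × I` (where `I` is the singular simplicial set of `[0,1]`, a
fibrant cylinder object for the point) restricting to the two maps at the ends. -/
noncomputable def SimpElemStrongHomotopy {X Y : SSet} (f g : X ⟶ Y) : Prop :=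
  ∃ h : sprod X Iset ⟶ Y, cylIncl0 X ≫ h = f ∧ cylIncl1 X ≫ h = g

/-- Two maps of simplicial sets are strongly homotopic if they are connected by a chain
of elementary strong homotopies. -/
noncomputable def SimpStronglyHomotopic {X Y : SSet} (f g : X ⟶ Y) : Prop :=
  Relation.EqvGen (fun p q : X ⟶ Y => SimpElemStrongHomotopy p q) f g

/-- Two simplicial sets are strongly homotopy equivalent if there are maps in both
directions whose composites are strongly homotopic to the identities. -/
noncomputable def SimpStronglyHomotopyEquivalent (X Y : SSet) : Prop :=
  ∃ (f : X ⟶ Y) (g : Y ⟶ X),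
    SimpStronglyHomotopic (g ≫ f) (𝟙 Y) ∧ SimpStronglyHomotopic (f ≫ g) (𝟙 X)

/-! ## The normalized cochain algebra of a simplicial set -/

open CategoryTheory Simplicial

/-- The morphism `[p] ⟶ [n]` of the simplex category selecting the front `p`-face. -/
def frontHom (p n : ℕ) (h : p ≤ n) : SimplexCategory.mk p ⟶ SimplexCategory.mk n :=
  SimplexCategory.mkHom ⟨fun j => Fin.castLE (by omega) j,
    fun _ _ hab => hab⟩

/-- The morphism `[q] ⟶ [n]` of the simplex category selecting the back `q`-face. -/
def backHom (q n : ℕ) (h : q ≤ n) : SimplexCategory.mk q ⟶ SimplexCategory.mk n :=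
  SimplexCategory.mkHom ⟨fun j => (⟨n - q + (j : ℕ), by have := j.isLt; omega⟩ : Fin (n + 1)),
    fun a b hab => by simp only [Fin.le_def] at hab ⊢; omega⟩

/-- `E` presents the dg algebra `CX` as the normalized cochain algebra `C*(X)` of the
simplicial set `X` over `k` (with the Alexander-Whitney cup product): via the component
maps `E`, homogeneous degree-`n` elements of `CX` correspond exactly to normalized
`k`-valued `n`-cochains on `X`, compatibly with the unit, the cup product, and the
simplicial coboundary. -/
def IsCochainPresentation {k : Type} [CommRing k] (X : SSet) (CX : DGA k)
    (E : CX.A → ∀ n : ℕ, X.obj (Opposite.op (SimplexCategory.mk n)) → k) : Prop :=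
  (∀ a b (n : ℕ) σ, E (a + b) n σ = E a n σ + E b n σ) ∧
  (∀ (c : k) a (n : ℕ) σ, E (c • a) n σ = c • E a n σ) ∧
  (∀ a (n : ℕ) (i : Fin (n + 1)) (τ : X.obj (Opposite.op (SimplexCategory.mk n))),
    E a (n + 1) (X.map (SimplexCategory.σ i).op τ) = 0) ∧
  (∀ (i : ℤ), i < 0 → CX.gr i = ⊥) ∧
  (∀ (m : ℤ), ∀ a ∈ CX.gr m, ∀ (n : ℕ) σ, (n : ℤ) ≠ m → E a n σ = 0) ∧
  (∀ (m : ℤ), ∀ a ∈ CX.gr m, (∀ (n : ℕ) σ, E a n σ = 0) → a = 0) ∧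
  (∀ c : X.obj (Opposite.op (SimplexCategory.mk 0)) → k,
    ∃ a ∈ CX.gr (0 : ℤ), ∀ σ, E a 0 σ = c σ) ∧
  (∀ (n : ℕ) (c : X.obj (Opposite.op (SimplexCategory.mk (n + 1))) → k),
    (∀ (i : Fin (n + 1)) (τ : X.obj (Opposite.op (SimplexCategory.mk n))),
      c (X.map (SimplexCategory.σ i).op τ) = 0) →
    ∃ a ∈ CX.gr ((n : ℤ) + 1), ∀ σ, E a (n + 1) σ = c σ) ∧
  (∀ σ, E 1 0 σ = 1) ∧ (∀ (n : ℕ) σ, E 1 (n + 1) σ = 0) ∧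
  (∀ (p q : ℕ), ∀ a ∈ CX.gr (p : ℤ), ∀ b ∈ CX.gr (q : ℤ),
    ∀ σ : X.obj (Opposite.op (SimplexCategory.mk (p + q))),
    E (a * b) (p + q) σ =
      E a p (X.map (frontHom p (p + q) (by omega)).op σ) *
        E b q (X.map (backHom q (p + q) (by omega)).op σ)) ∧
  (∀ (n : ℕ), ∀ a ∈ CX.gr (n : ℤ),
    ∀ σ : X.obj (Opposite.op (SimplexCategory.mk (n + 1))),
    E (CX.d a) (n + 1) σ =
      ∑ i : Fin (n + 2), (((-1 : ℤˣ) ^ (i : ℕ) : ℤˣ) : ℤ) •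
        E a n (X.map (SimplexCategory.δ i).op σ))

/-- The dg algebra map `C*(Y) → C*(X)` induced by a simplicial map `f : X → Y` is
characterized by `E_X (φ a) n σ = E_Y a n (f σ)`. -/
def IsPullbackHom {k : Type} [CommRing k] {X Y : SSet} (f : X ⟶ Y)
    {CX CY : DGA k}
    (EY : CY.A → ∀ n : ℕ, Y.obj (Opposite.op (SimplexCategory.mk n)) → k)
    (EX : CX.A → ∀ n : ℕ, X.obj (Opposite.op (SimplexCategory.mk n)) → k)
    (φ : DGAHom CY CX) : Prop :=
  ∀ a (n : ℕ) σ, EX (φ.toFun a) n σ = EY a n (f.app (Opposite.op (SimplexCategory.mk n)) σ)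

/-!
Let `h : X × I ⟶ Y` be an elementary strong homotopy. A cochain `w` on `X × I` and an `n`-simplex
`t` of `I` give a cochain `slant t w` on `X`, whose value on `x` is the value of `w` on the
Eilenberg–Zilber shuffle product `x × t`. The homotopy from `f*` to `g*` sends `a` to the family of
the cochains `slant t (h* a)`.

The shuffle map is a map of differential graded coalgebras: it is compatible with the boundaries,
and also, strictly, with the Alexander–Whitney diagonals. The former makes the homotopy commute with
the differentials and the latter makes it multiplicative. Both are identities between signed sums
over lattice paths, which hold for functions on arbitrary lists of vertices and follow by recursion
on the first step of a path.
-/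

/-! ## Shuffle sums over lists of vertices -/

section Shuffle

variable {k : Type*} [CommRing k] {α β γ : Type*}

/-- The alternating sum of the values of `F` on the lists obtained from `l` by deleting one entry:
the simplicial coboundary, written on lists of vertices. -/
def listCoboundary : (List γ → k) →ₗ[k] List γ → k where
  toFun F l := ∑ i ∈ Finset.range l.length, (-1) ^ i * F (l.eraseIdx i)
  map_add' F G := by ext l; simp [mul_add, Finset.sum_add_distrib]
  map_smul' c F := by ext l; simp [Finset.mul_sum, mul_left_comm]

lemma listCoboundary_apply (F : List γ → k) (l : List γ) :
    listCoboundary F l = ∑ i ∈ Finset.range l.length, (-1) ^ i * F (l.eraseIdx i) := rfl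

@[simp] lemma listCoboundary_nil (F : List γ → k) : listCoboundary F [] = 0 := by
  simp [listCoboundary_apply]

lemma listCoboundary_cons (F : List γ → k) (x : γ) (l : List γ) :
    listCoboundary F (x :: l) = F l - listCoboundary (fun l ↦ F (x :: l)) l := by
  simp only [listCoboundary_apply, List.length_cons, Finset.sum_range_succ',
    List.eraseIdx_cons_succ, List.eraseIdx_cons_zero, pow_succ, mul_neg, mul_one, neg_mul,
    Finset.sum_neg_distrib, pow_zero, one_mul]
  ring

lemma listCoboundary_congr {F G : List γ → k} {l : List γ}
    (h : ∀ l', l'.length + 1 = l.length → F l' = G l') :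
    listCoboundary F l = listCoboundary G l := by
  simp only [listCoboundary_apply]
  refine Finset.sum_congr rfl fun i hi ↦ ?_
  have := Finset.mem_range.1 hi
  rw [h _ (by rw [List.length_eraseIdx_of_lt this]; omega)]

lemma listCoboundary_map {δ : Type*} (f : γ → δ) (F : List δ → k) (l : List γ) :
    listCoboundary F (l.map f) = listCoboundary (fun l ↦ F (l.map f)) l := by
  simp [listCoboundary_apply, List.eraseIdx_map]

/-- The Alexander–Whitney product, written on lists of vertices: `F` is evaluated on the front and
`G` on the back of `l`, the two sharing one entry. -/
def listCup (F G : List γ → k) (l : List γ) : k :=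
  ∑ r ∈ Finset.range l.length, F (l.take (r + 1)) * G (l.drop r)

lemma listCup_cons (F G : List γ → k) (z : γ) (l : List γ) :
    listCup F G (z :: l) = F [z] * G (z :: l) + listCup (fun l ↦ F (z :: l)) G l := by
  simp [listCup, Finset.sum_range_succ', add_comm]

lemma listCup_map {δ : Type*} (f : γ → δ) (F G : List δ → k) (l : List γ) :
    listCup F G (l.map f) = listCup (fun l ↦ F (l.map f)) (fun l ↦ G (l.map f)) l := by
  simp [listCup, List.map_take, List.map_drop]

/-- The signed sum of the values of `F` on the lattice paths from the first to the last vertex of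
the grid `xs × ys`, a path being the list of its vertices.  The sign of a path is the sign of the
corresponding shuffle, so this is the Eilenberg–Zilber shuffle product of `xs` and `ys`. -/
def shuffleSum (xs : List α) (ys : List β) : (List (α × β) → k) →ₗ[k] k :=
  match xs, ys with
  | [], _ => 0
  | _ :: _, [] => 0
  | x :: xs, y :: ys =>
    (if xs = [] ∧ ys = [] then LinearMap.proj [(x, y)] else 0) +
      shuffleSum xs (y :: ys) ∘ₗ LinearMap.funLeft k k (List.cons (x, y)) +
      (-1 : k) ^ xs.length • shuffleSum (x :: xs) ys ∘ₗ LinearMap.funLeft k k (List.cons (x, y))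
termination_by xs.length + ys.length

@[simp] lemma shuffleSum_nil_left (ys : List β) :
    shuffleSum ([] : List α) ys = (0 : (List (α × β) → k) →ₗ[k] k) := by
  rw [shuffleSum]

@[simp] lemma shuffleSum_nil_right (xs : List α) :
    shuffleSum xs ([] : List β) = (0 : (List (α × β) → k) →ₗ[k] k) := by
  cases xs <;> rw [shuffleSum]

lemma shuffleSum_cons_cons (x : α) (xs : List α) (y : β) (ys : List β) (F : List (α × β) → k) :
    shuffleSum (x :: xs) (y :: ys) F =
      (if xs = [] ∧ ys = [] then F [(x, y)] else 0) +
        shuffleSum xs (y :: ys) (fun l ↦ F ((x, y) :: l)) +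
        (-1) ^ xs.length * shuffleSum (x :: xs) ys (fun l ↦ F ((x, y) :: l)) := by
  rw [shuffleSum]
  split_ifs <;> rfl

lemma shuffleSum_map {α' β' : Type*} (f : α → α') (g : β → β') (xs : List α) (ys : List β)
    (F : List (α' × β') → k) :
    shuffleSum (xs.map f) (ys.map g) F = shuffleSum xs ys fun l ↦ F (l.map (Prod.map f g)) := by
  induction xs, ys using shuffleSum.induct generalizing F with
  | case1 | case2 => simp
  | case3 x xs y ys ih₁ ih₂ =>
    simp only [List.map_cons] at ih₁ ih₂
    simp [shuffleSum_cons_cons, ih₁, ih₂]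

/-- `l` is the list of vertices of a lattice path in the grid `xs × ys` from the first to the last
vertex: each step advances exactly one of the two coordinates. -/
inductive IsLatticePath : List α → List β → List (α × β) → Prop where
  /-- the constant path -/
  | point (x : α) (y : β) : IsLatticePath [x] [y] [(x, y)]
  /-- a path whose first step is along `xs` -/
  | horiz {x : α} {y : β} {xs : List α} {ys : List β} {l : List (α × β)} :
      IsLatticePath xs (y :: ys) l → IsLatticePath (x :: xs) (y :: ys) ((x, y) :: l)
  /-- a path whose first step is along `ys` -/
  | vert {x : α} {y : β} {xs : List α} {ys : List β} {l : List (α × β)} :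
      IsLatticePath (x :: xs) ys l → IsLatticePath (x :: xs) (y :: ys) ((x, y) :: l)

namespace IsLatticePath

variable {xs : List α} {ys : List β} {l : List (α × β)}

lemma length_add_one (h : IsLatticePath xs ys l) : l.length + 1 = xs.length + ys.length := by
  induction h <;> simp_all <;> omega

lemma swap (h : IsLatticePath xs ys l) : IsLatticePath ys xs (l.map Prod.swap) := by
  induction h with
  | point x y => exact point y x
  | horiz _ ih => exact ih.vert
  | vert _ ih => exact ih.horiz

lemma fst_mem (h : IsLatticePath xs ys l) {z : α × β} (hz : z ∈ l) : z.1 ∈ xs := by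
  induction h with grind

lemma pairwise_fst {r : α → α → Prop} [Std.Refl r] (h : IsLatticePath xs ys l)
    (hxs : xs.Pairwise r) : l.Pairwise fun z w ↦ r z.1 w.1 := by
  induction h with
  | point => simp
  | horiz h ih =>
    rw [List.pairwise_cons] at hxs ⊢
    exact ⟨fun z hz ↦ hxs.1 _ (h.fst_mem hz), ih hxs.2⟩
  | vert h ih =>
    refine List.pairwise_cons.2 ⟨fun z hz ↦ ?_, ih hxs⟩
    obtain hz | hz := List.mem_cons.1 (h.fst_mem hz)
    · exact hz ▸ refl _
    · exact (List.pairwise_cons.1 hxs).1 _ hz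

lemma pairwise_snd {r : β → β → Prop} [Std.Refl r] (h : IsLatticePath xs ys l)
    (hys : ys.Pairwise r) : l.Pairwise fun z w ↦ r z.2 w.2 := by
  simpa [List.pairwise_map] using h.swap.pairwise_fst hys

lemma eq_cons {x : α} {y : β} (h : IsLatticePath (x :: xs) (y :: ys) l) :
    ∃ l', l = (x, y) :: l' := by
  cases h <;> exact ⟨_, rfl⟩

lemma isChain_ne_fst (h : IsLatticePath xs ys l) (hl : l.IsChain (· ≠ ·)) :
    xs.IsChain (· ≠ ·) := by
  induction h with
  | point => simp
  | @horiz x y xs ys l h ih =>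
    obtain _ | ⟨x', xs⟩ := xs
    · simp
    · obtain ⟨l, rfl⟩ := h.eq_cons
      simp_all
  | vert _ ih => exact ih hl.tail

lemma isChain_ne_snd (h : IsLatticePath xs ys l) (hl : l.IsChain (· ≠ ·)) :
    ys.IsChain (· ≠ ·) :=
  h.swap.isChain_ne_fst <| (List.isChain_map _).2 <| hl.imp fun _ _ ↦ Prod.swap_injective.ne

end IsLatticePath

lemma shuffleSum_congr {xs : List α} {ys : List β} {F G : List (α × β) → k}
    (h : ∀ l, IsLatticePath xs ys l → F l = G l) : shuffleSum xs ys F = shuffleSum xs ys G := by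
  induction xs, ys using shuffleSum.induct generalizing F G with
  | case1 | case2 => simp
  | case3 x xs y ys ih₁ ih₂ =>
    rw [shuffleSum_cons_cons, shuffleSum_cons_cons, ih₁ fun l hl ↦ h _ hl.horiz,
      ih₂ fun l hl ↦ h _ hl.vert]
    congr 2
    split_ifs with he
    · obtain ⟨rfl, rfl⟩ := he
      exact h _ (.point x y)
    · rfl

lemma shuffleSum_eq_zero {xs : List α} {ys : List β} {F : List (α × β) → k}
    (h : ∀ l, IsLatticePath xs ys l → F l = 0) : shuffleSum xs ys F = 0 :=
  (shuffleSum_congr h).trans (map_zero (shuffleSum xs ys))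

lemma shuffleSum_singleton_right {xs : List α} (hxs : xs ≠ []) (y : β) (F : List (α × β) → k) :
    shuffleSum xs [y] F = F (xs.map fun x ↦ (x, y)) := by
  induction xs generalizing F with
  | nil => contradiction
  | cons x xs ih =>
    by_cases h : xs = []
    · simp [shuffleSum_cons_cons, h]
    · simp [shuffleSum_cons_cons, h, ih h]

lemma listCoboundary_ite_eq_nil (c : k) (l : List γ) :
    listCoboundary (fun l ↦ if l = [] then c else 0) l = if l.length = 1 then c else 0 := by
  obtain _ | ⟨x, _ | ⟨y, l⟩⟩ := l
  · simp
  · simp [listCoboundary_cons]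
  · simp [listCoboundary_cons, ← Pi.zero_def]

lemma listCoboundary_shuffleSum_left (x : α) (xs : List α) (y : β) (ys : List β)
    (F : List (α × β) → k) :
    listCoboundary (fun l ↦ shuffleSum (x :: l) (y :: ys) F) xs =
      (if xs.length = 1 ∧ ys = [] then F [(x, y)] else 0) +
        listCoboundary (fun l ↦ shuffleSum l (y :: ys) fun l ↦ F ((x, y) :: l)) xs -
        (-1) ^ xs.length *
          listCoboundary (fun l ↦ shuffleSum (x :: l) ys fun l ↦ F ((x, y) :: l)) xs := by
  trans listCoboundary ((fun l ↦ if l = [] then if ys = [] then F [(x, y)] else 0 else 0) +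
      (fun l ↦ shuffleSum l (y :: ys) fun l ↦ F ((x, y) :: l)) -
      (-1 : k) ^ xs.length • fun l ↦ shuffleSum (x :: l) ys fun l ↦ F ((x, y) :: l)) xs
  · refine listCoboundary_congr fun l hl ↦ ?_
    simp only [shuffleSum_cons_cons, ite_and, Pi.add_apply, Pi.sub_apply, Pi.smul_apply,
      smul_eq_mul, ← hl, pow_succ]
    ring
  · simp [listCoboundary_ite_eq_nil, ite_and]

lemma listCoboundary_shuffleSum_right (x : α) (xs : List α) (y : β) (ys : List β)
    (F : List (α × β) → k) :
    listCoboundary (fun l ↦ shuffleSum (x :: xs) (y :: l) F) ys =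
      (if ys.length = 1 ∧ xs = [] then F [(x, y)] else 0) +
        listCoboundary (fun l ↦ shuffleSum xs (y :: l) fun l ↦ F ((x, y) :: l)) ys +
        (-1) ^ xs.length *
          listCoboundary (fun l ↦ shuffleSum (x :: xs) l fun l ↦ F ((x, y) :: l)) ys := by
  trans listCoboundary ((fun l ↦ if l = [] then if xs = [] then F [(x, y)] else 0 else 0) +
      (fun l ↦ shuffleSum xs (y :: l) fun l ↦ F ((x, y) :: l)) +
      (-1 : k) ^ xs.length • fun l ↦ shuffleSum (x :: xs) l fun l ↦ F ((x, y) :: l)) ys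
  · simp only [shuffleSum_cons_cons, and_comm (a := xs = []), ite_and]
    rfl
  · simp [listCoboundary_ite_eq_nil, ite_and]

/-- The last term is the contribution of the empty list, which is not a path. -/
theorem shuffleSum_listCoboundary (xs : List α) (ys : List β) (F : List (α × β) → k) :
    shuffleSum xs ys (listCoboundary F) =
      listCoboundary (fun l ↦ shuffleSum l ys F) xs -
        (-1) ^ xs.length * listCoboundary (fun l ↦ shuffleSum xs l F) ys +
        if xs.length = 1 ∧ ys.length = 1 then F [] else 0 := by
  induction xs, ys using shuffleSum.induct generalizing F with
  | case1 ys => simp [← Pi.zero_def]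
  | case2 x xs => simp [← Pi.zero_def]
  | case3 x xs y ys ih₁ ih₂ =>
    have hcons : ∀ (xs : List α) (ys : List β),
        shuffleSum xs ys (fun l ↦ listCoboundary F ((x, y) :: l)) =
          shuffleSum xs ys F - shuffleSum xs ys (listCoboundary fun l ↦ F ((x, y) :: l)) := by
      intro xs ys
      rw [← map_sub]
      exact congrArg _ (funext fun l ↦ listCoboundary_cons F (x, y) l)
    rw [shuffleSum_cons_cons, hcons, hcons, ih₁, ih₂]
    simp only [listCoboundary_cons, listCoboundary_nil, listCoboundary_shuffleSum_left,
      listCoboundary_shuffleSum_right, List.length_cons, Nat.add_eq_right,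
      List.length_eq_zero_iff, pow_succ, sub_zero, and_comm]
    ring

/-- The contribution of the cut at `(x_a, y_b)` to the Alexander–Whitney formula, split according to
the first step of the front path. -/
lemma shuffleSum_cut (x : α) (xs : List α) (y : β) (ys : List β) (F G : List (α × β) → k)
    {a : ℕ} (ha : a ≤ xs.length) (b : ℕ) :
    (-1) ^ (b * (xs.length - a)) * (shuffleSum (x :: xs.take a) (y :: ys.take b) F *
        shuffleSum ((x :: xs).drop a) ((y :: ys).drop b) G) =
      (if a = 0 then if b = 0 then F [(x, y)] * shuffleSum (x :: xs) (y :: ys) G else 0 else 0) +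
      (-1) ^ (b * (xs.length - a)) *
        (shuffleSum (xs.take a) (y :: ys.take b) (fun l ↦ F ((x, y) :: l)) *
          shuffleSum ((x :: xs).drop a) ((y :: ys).drop b) G) +
      (-1) ^ (b * (xs.length - a) + a) *
        (shuffleSum (x :: xs.take a) (ys.take b) (fun l ↦ F ((x, y) :: l)) *
          shuffleSum ((x :: xs).drop a) ((y :: ys).drop b) G) := by
  have hpoint : (-1) ^ (b * (xs.length - a)) *
        ((if xs.take a = [] ∧ ys.take b = [] then F [(x, y)] else 0) *
          shuffleSum ((x :: xs).drop a) ((y :: ys).drop b) G) =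
      if a = 0 then if b = 0 then F [(x, y)] * shuffleSum (x :: xs) (y :: ys) G else 0 else 0 := by
    obtain _ | a := a <;> obtain _ | b := b <;> cases xs <;> cases ys <;> simp
  rw [← hpoint, shuffleSum_cons_cons, List.length_take_of_le ha, pow_add]
  ring

lemma sum_shuffleSum_cut (x : α) (xs : List α) (y : β) (ys : List β) (F G : List (α × β) → k) :
    (∑ a ∈ Finset.range (xs.length + 1), ∑ b ∈ Finset.range (ys.length + 1),
        (-1) ^ (b * (xs.length - a)) *
          (shuffleSum (x :: xs.take a) (y :: ys.take b) F *
            shuffleSum ((x :: xs).drop a) ((y :: ys).drop b) G)) =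
      F [(x, y)] * shuffleSum (x :: xs) (y :: ys) G +
      (∑ a ∈ Finset.range xs.length, ∑ b ∈ Finset.range (ys.length + 1),
        (-1) ^ (b * (xs.length - 1 - a)) *
          (shuffleSum (xs.take (a + 1)) (y :: ys.take b) (fun l ↦ F ((x, y) :: l)) *
            shuffleSum (xs.drop a) ((y :: ys).drop b) G)) +
      (-1) ^ xs.length *
      ∑ a ∈ Finset.range (xs.length + 1), ∑ b ∈ Finset.range ys.length,
        (-1) ^ (b * (xs.length - a)) *
          (shuffleSum (x :: xs.take a) (ys.take (b + 1)) (fun l ↦ F ((x, y) :: l)) *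
            shuffleSum ((x :: xs).drop a) (ys.drop b) G) := by
  rw [Finset.sum_congr rfl fun a ha ↦ Finset.sum_congr rfl fun b _ ↦
    shuffleSum_cut x xs y ys F G (Finset.mem_range_succ_iff.1 ha) b]
  simp only [Finset.sum_add_distrib]
  congr 2
  · simp
  · simp [Finset.sum_range_succ', Nat.sub_sub, Nat.add_comm 1]
  · rw [Finset.mul_sum]
    refine Finset.sum_congr rfl fun a ha ↦ ?_
    rw [Finset.sum_range_succ', Finset.mul_sum]
    simp only [List.take_zero, shuffleSum_nil_right, LinearMap.zero_apply, zero_mul, mul_zero,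
      add_zero, List.drop_succ_cons]
    refine Finset.sum_congr rfl fun b _ ↦ ?_
    have hsign : (b + 1) * (xs.length - a) + a = xs.length + b * (xs.length - a) := by
      have := Finset.mem_range_succ_iff.1 ha
      rw [add_one_mul]
      omega
    rw [hsign, pow_add, mul_assoc]

theorem shuffleSum_listCup (xs : List α) (ys : List β) (F G : List (α × β) → k) :
    shuffleSum xs ys (listCup F G) =
      ∑ a ∈ Finset.range xs.length, ∑ b ∈ Finset.range ys.length,
        (-1) ^ (b * (xs.length - 1 - a)) *
          (shuffleSum (xs.take (a + 1)) (ys.take (b + 1)) F *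
            shuffleSum (xs.drop a) (ys.drop b) G) := by
  induction xs, ys using shuffleSum.induct generalizing F with
  | case1 | case2 => simp
  | case3 x xs y ys ih₁ ih₂ =>
    have hcons : ∀ (xs : List α) (ys : List β),
        shuffleSum xs ys (fun l ↦ listCup F G ((x, y) :: l)) =
          F [(x, y)] * shuffleSum xs ys (fun l ↦ G ((x, y) :: l)) +
            shuffleSum xs ys (listCup (fun l ↦ F ((x, y) :: l)) G) := by
      intro xs ys
      rw [← smul_eq_mul, ← map_smul, ← map_add]
      exact congrArg _ (funext fun l ↦ listCup_cons F G (x, y) l)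
    rw [shuffleSum_cons_cons, hcons, hcons, ih₁, ih₂]
    simp only [List.length_cons, List.take_succ_cons, Nat.add_sub_cancel, sum_shuffleSum_cut]
    have hpoint : (if xs = [] ∧ ys = [] then listCup F G [(x, y)] else 0) =
        F [(x, y)] * if xs = [] ∧ ys = [] then G [(x, y)] else 0 := by
      simp [listCup]
    rw [hpoint, shuffleSum_cons_cons _ _ _ _ G]
    ring

end Shuffle

/-! ## Cochains and slant products -/

section Cochains

universe u

variable {k : Type*} [CommRing k] {X Y : SSet.{u}}

/-- Inhomogeneous simplicial cochains of arbitrary, possibly unbounded, degree. -/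
abbrev SimplicialCochain (X : SSet.{u}) (k : Type*) : Type _ := ∀ n : ℕ, X _⦋n⦌ → k

namespace SimplicialCochain

/-- The unit of the cup product. -/
def unit : SimplicialCochain X k := fun n _ ↦ if n = 0 then 1 else 0

/-- The simplicial coboundary. -/
def coboundary (w : SimplicialCochain X k) : SimplicialCochain X k := fun n x ↦
  match n, x with
  | 0, _ => 0
  | n + 1, x => ∑ r : Fin (n + 2), (-1) ^ (r : ℕ) * w n (X.map (SimplexCategory.δ r).op x)

/-- The Alexander–Whitney cup product. -/
def cup (w w' : SimplicialCochain X k) : SimplicialCochain X k := fun n x ↦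
  ∑ p : Fin (n + 1), w p (X.map (frontHom p n p.is_le).op x) *
    w' (n - p) (X.map (backHom (n - p) n (n.sub_le p)).op x)

/-- The pullback of cochains along a map of simplicial sets. -/
def comap (f : X ⟶ Y) : SimplicialCochain Y k →ₗ[k] SimplicialCochain X k where
  toFun w _ x := w _ (f.app _ x)
  map_add' _ _ := rfl
  map_smul' _ _ := rfl

lemma comap_apply (f : X ⟶ Y) (w : SimplicialCochain Y k) (n : ℕ) (x : X _⦋n⦌) :
    comap f w n x = w n (f.app _ x) := rfl

/-- A cochain is normalized if it vanishes on degenerate simplices. -/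
def IsNormalized (w : SimplicialCochain X k) : Prop :=
  ∀ (n : ℕ) (i : Fin (n + 1)) (x : X _⦋n⦌), w (n + 1) (X.map (SimplexCategory.σ i).op x) = 0

lemma coboundary_comap (f : X ⟶ Y) (w : SimplicialCochain Y k) :
    coboundary (comap f w) = comap f (coboundary w) := by
  ext n x
  cases n <;> simp [coboundary, comap_apply, NatTrans.naturality_apply]

lemma cup_comap (f : X ⟶ Y) (w w' : SimplicialCochain Y k) :
    cup (comap f w) (comap f w') = comap f (cup w w') := by
  ext n x
  simp [cup, comap_apply, NatTrans.naturality_apply]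

lemma IsNormalized.comap {w : SimplicialCochain Y k} (hw : w.IsNormalized) (f : X ⟶ Y) :
    (SimplicialCochain.comap f w).IsNormalized := by
  intro n i x
  simp only [comap_apply, NatTrans.naturality_apply, hw n i]

end SimplicialCochain

end Cochains

section VertexLists

universe u

variable {k : Type*} {X : SSet.{u}}

lemma eraseIdx_finRange {n : ℕ} (r : Fin (n + 2)) :
    (List.finRange (n + 2)).eraseIdx r =
      List.ofFn (α := Fin (n + 2)) (SimplexCategory.δ r : ⦋n⦌ ⟶ ⦋n + 1⦌) := by
  refine List.ext_getElem (by simp [List.length_eraseIdx, -List.ofFn_succ]) fun i _ _ ↦ ?_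
  rw [List.getElem_eraseIdx, List.getElem_ofFn]
  change _ = r.succAbove _
  split_ifs <;> simp_all [Fin.succAbove, Fin.lt_def]

lemma take_finRange {n p : ℕ} (h : p ≤ n) :
    (List.finRange (n + 1)).take (p + 1) = List.ofFn (α := Fin (n + 1)) (frontHom p n h) := by
  refine List.ext_getElem (by simp [h, -List.ofFn_succ]) fun i _ _ ↦ ?_
  rw [List.getElem_take, List.getElem_finRange, List.getElem_ofFn]
  rfl

lemma drop_finRange {n p : ℕ} (h : p ≤ n) :
    (List.finRange (n + 1)).drop p =
      List.ofFn (α := Fin (n + 1)) (backHom (n - p) n (n.sub_le p)) := by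
  refine List.ext_getElem (by simp [-List.ofFn_succ]; omega) fun i _ _ ↦ ?_
  rw [List.getElem_drop, List.getElem_finRange, List.getElem_ofFn]
  exact Fin.ext (congrArg (· + i) (Nat.sub_sub_self h).symm)

/-- `F` gives on the vertex list of every face (or degeneracy) of `x` the value of the cochain `w`
on it. -/
def EvaluatesOn {m : ℕ} (F : List (Fin (m + 1)) → k) (w : SimplicialCochain X k) (x : X _⦋m⦌) :
    Prop :=
  ∀ (i : ℕ) (φ : ⦋i⦌ ⟶ ⦋m⦌), F (List.ofFn φ) = w i (X.map φ.op x)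

variable [CommRing k] {m : ℕ} {F G : List (Fin (m + 1)) → k} {w w' : SimplicialCochain X k}
  {x : X _⦋m⦌}

lemma EvaluatesOn.listCoboundary_finRange (hF : EvaluatesOn F w x) (hF₀ : F [] = 0) :
    listCoboundary F (List.finRange (m + 1)) = w.coboundary m x := by
  obtain _ | m := m
  · change listCoboundary F [0] = 0
    simp [listCoboundary_cons, hF₀]
  · rw [listCoboundary_apply, List.length_finRange, Finset.sum_range]
    simp only [eraseIdx_finRange, hF _ _]
    rfl

lemma EvaluatesOn.listCup_finRange (hF : EvaluatesOn F w x) (hG : EvaluatesOn G w' x) :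
    listCup F G (List.finRange (m + 1)) = w.cup w' m x := by
  rw [listCup, List.length_finRange, Finset.sum_range]
  refine Finset.sum_congr rfl fun p _ ↦ ?_
  rw [take_finRange p.is_le, drop_finRange p.is_le, hF, hG]

end VertexLists

section ShuffleEval

universe u v

variable {k : Type*} [CommRing k] {X : SSet.{u}} {T : SSet.{v}} {i m n : ℕ}

/-- The list of vertices of the simplex `(φ, ψ)` of `Δ[m] × Δ[n]`. -/
def vertexList (φ : ⦋i⦌ ⟶ ⦋m⦌) (ψ : ⦋i⦌ ⟶ ⦋n⦌) : List (Fin (m + 1) × Fin (n + 1)) :=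
  List.ofFn fun j ↦ (φ j, ψ j)

lemma vertexList_injective : Function.Injective
    fun s : Σ i : ℕ, (⦋i⦌ ⟶ ⦋m⦌) × (⦋i⦌ ⟶ ⦋n⦌) ↦ vertexList s.2.1 s.2.2 := by
  rintro ⟨i, φ, ψ⟩ ⟨i', φ', ψ'⟩ h
  obtain rfl : i = i' := by simpa [vertexList, -List.ofFn_succ] using congrArg List.length h
  have hj := fun j ↦ congrFun (List.ofFn_injective h) j
  obtain rfl : φ = φ' := by ext j : 3; exact congrArg Prod.fst (hj j)
  obtain rfl : ψ = ψ' := by ext j : 3; exact congrArg Prod.snd (hj j)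
  rfl

lemma map_prodMap_vertexList {a b : ℕ} (φ : ⦋i⦌ ⟶ ⦋a⦌) (ψ : ⦋i⦌ ⟶ ⦋b⦌) (φ' : ⦋a⦌ ⟶ ⦋m⦌)
    (ψ' : ⦋b⦌ ⟶ ⦋n⦌) :
    (vertexList φ ψ).map (Prod.map φ' ψ') = vertexList (φ ≫ φ') (ψ ≫ ψ') := by
  rw [vertexList, List.map_ofFn]
  rfl

lemma vertexList_eq_map (φ : ⦋i⦌ ⟶ ⦋m⦌) (ψ : ⦋i⦌ ⟶ ⦋n⦌) :
    vertexList φ ψ = (List.finRange (i + 1)).map fun j ↦ (φ j, ψ j) :=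
  List.ofFn_eq_map

lemma IsLatticePath.exists_eq_vertexList {l : List (Fin (m + 1) × Fin (n + 1))}
    (h : IsLatticePath (List.finRange (m + 1)) (List.finRange (n + 1)) l) :
    ∃ (φ : ⦋m + n⦌ ⟶ ⦋m⦌) (ψ : ⦋m + n⦌ ⟶ ⦋n⦌), l = vertexList φ ψ := by
  have hlen : l.length = m + n + 1 := by
    have := h.length_add_one
    simp only [List.length_finRange] at this
    omega
  obtain ⟨f, rfl⟩ : ∃ f : Fin (m + n + 1) → Fin (m + 1) × Fin (n + 1), List.ofFn f = l :=
    ⟨fun j ↦ l.get (j.cast hlen.symm), by simp [← hlen]⟩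
  have hfst := List.pairwise_ofFn.1 (h.pairwise_fst (List.pairwise_le_finRange _))
  have hsnd := List.pairwise_ofFn.1 (h.pairwise_snd (List.pairwise_le_finRange _))
  exact ⟨SimplexCategory.mkHom ⟨fun j ↦ (f j).1, monotone_iff_forall_lt.2 hfst⟩,
    SimplexCategory.mkHom ⟨fun j ↦ (f j).2, monotone_iff_forall_lt.2 hsnd⟩, rfl⟩

/-- The cochain `w` on `X × T`, evaluated on the simplex of `x × t` with the given list of vertices,
if there is such a simplex. -/
noncomputable def evalOnVertices (w : SimplicialCochain (sprod X T) k) (x : X _⦋m⦌) (t : T _⦋n⦌) :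
    List (Fin (m + 1) × Fin (n + 1)) → k :=
  Function.extend (fun s : Σ i : ℕ, (⦋i⦌ ⟶ ⦋m⦌) × (⦋i⦌ ⟶ ⦋n⦌) ↦ vertexList s.2.1 s.2.2)
    (fun s ↦ w s.1 (X.map s.2.1.op x, T.map s.2.2.op t)) 0

variable (w w' : SimplicialCochain (sprod X T) k) (x : X _⦋m⦌) (t : T _⦋n⦌)

lemma evalOnVertices_vertexList (φ : ⦋i⦌ ⟶ ⦋m⦌) (ψ : ⦋i⦌ ⟶ ⦋n⦌) :
    evalOnVertices w x t (vertexList φ ψ) = w i (X.map φ.op x, T.map ψ.op t) :=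
  vertexList_injective.extend_apply _ _ ⟨i, φ, ψ⟩

lemma evalOnVertices_nil : evalOnVertices w x t [] = 0 :=
  Function.extend_apply' _ _ _ <| by rintro ⟨⟨i, φ, ψ⟩, h⟩; simp [vertexList] at h

lemma evaluatesOn_evalOnVertices (φ : ⦋i⦌ ⟶ ⦋m⦌) (ψ : ⦋i⦌ ⟶ ⦋n⦌) :
    EvaluatesOn (fun l ↦ evalOnVertices w x t (l.map fun j ↦ (φ j, ψ j))) w
      (X.map φ.op x, T.map ψ.op t) := by
  intro j χ
  have hχ : (List.ofFn χ).map (fun j ↦ (φ j, ψ j)) = vertexList (χ ≫ φ) (χ ≫ ψ) := by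
    rw [List.map_ofFn]
    rfl
  simp only [hχ, evalOnVertices_vertexList, op_comp, X.map_comp_apply, T.map_comp_apply]
  rfl

lemma evalOnVertices_coboundary (φ : ⦋i⦌ ⟶ ⦋m⦌) (ψ : ⦋i⦌ ⟶ ⦋n⦌) :
    evalOnVertices w.coboundary x t (vertexList φ ψ) =
      listCoboundary (evalOnVertices w x t) (vertexList φ ψ) := by
  rw [evalOnVertices_vertexList, vertexList_eq_map, listCoboundary_map,
    (evaluatesOn_evalOnVertices w x t φ ψ).listCoboundary_finRange (evalOnVertices_nil w x t)]

lemma evalOnVertices_cup (φ : ⦋i⦌ ⟶ ⦋m⦌) (ψ : ⦋i⦌ ⟶ ⦋n⦌) :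
    evalOnVertices (w.cup w') x t (vertexList φ ψ) =
      listCup (evalOnVertices w x t) (evalOnVertices w' x t) (vertexList φ ψ) := by
  rw [evalOnVertices_vertexList, vertexList_eq_map, listCup_map,
    (evaluatesOn_evalOnVertices w x t φ ψ).listCup_finRange
      (evaluatesOn_evalOnVertices w' x t φ ψ)]

variable {w} in
lemma evalOnVertices_eq_zero_of_not_isChain (hw : w.IsNormalized)
    {l : List (Fin (m + 1) × Fin (n + 1))} (hl : ¬ l.IsChain (· ≠ ·)) :
    evalOnVertices w x t l = 0 := by
  by_cases h : ∃ s : Σ i : ℕ, (⦋i⦌ ⟶ ⦋m⦌) × (⦋i⦌ ⟶ ⦋n⦌), vertexList s.2.1 s.2.2 = l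
  · obtain ⟨⟨i, φ, ψ⟩, rfl⟩ := h
    obtain ⟨j, hj, hφ, hψ⟩ : ∃ (j : ℕ) (hj : j + 1 < i + 1),
        φ ⟨j, j.lt_succ_self.trans hj⟩ = φ ⟨j + 1, hj⟩ ∧
          ψ ⟨j, j.lt_succ_self.trans hj⟩ = ψ ⟨j + 1, hj⟩ := by
      simpa only [vertexList, List.isChain_ofFn, not_forall, not_not, Prod.mk.injEq] using hl
    obtain ⟨i, rfl⟩ : ∃ i', i = i' + 1 := ⟨i - 1, by omega⟩
    obtain ⟨φ', rfl⟩ :=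
      SimplexCategory.eq_σ_comp_of_not_injective' φ ⟨j, Nat.succ_lt_succ_iff.1 hj⟩ hφ
    obtain ⟨ψ', rfl⟩ :=
      SimplexCategory.eq_σ_comp_of_not_injective' ψ ⟨j, Nat.succ_lt_succ_iff.1 hj⟩ hψ
    simp only [evalOnVertices_vertexList, op_comp, X.map_comp_apply, T.map_comp_apply]
    exact hw _ _ (X.map φ'.op x, T.map ψ'.op t)
  · exact Function.extend_apply' _ _ _ h

end ShuffleEval

section Slant

universe u v

variable {k : Type*} [CommRing k] {X : SSet.{u}} {T : SSet.{v}} {m n : ℕ}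

lemma shuffleSum_finRange_congr {F G : List (Fin (m + 1) × Fin (n + 1)) → k}
    (h : ∀ (φ : ⦋m + n⦌ ⟶ ⦋m⦌) (ψ : ⦋m + n⦌ ⟶ ⦋n⦌), F (vertexList φ ψ) = G (vertexList φ ψ)) :
    shuffleSum (List.finRange (m + 1)) (List.finRange (n + 1)) F =
      shuffleSum (List.finRange (m + 1)) (List.finRange (n + 1)) G :=
  shuffleSum_congr fun l hl ↦ by
    obtain ⟨φ, ψ, rfl⟩ := hl.exists_eq_vertexList
    exact h φ ψ

/-- The slant product of cochains on `X × T` with a simplex `t` of `T`: the value of `slant t w` on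
`x` is the value of `w` on the Eilenberg–Zilber shuffle product of `x` and `t`. -/
noncomputable def slant (t : T _⦋n⦌) :
    SimplicialCochain (sprod X T) k →ₗ[k] SimplicialCochain X k where
  toFun w m x :=
    shuffleSum (List.finRange (m + 1)) (List.finRange (n + 1)) (evalOnVertices w x t)
  map_add' w w' := by
    ext m x
    rw [Pi.add_apply, Pi.add_apply, ← map_add]
    refine shuffleSum_finRange_congr fun φ ψ ↦ ?_
    simp only [evalOnVertices_vertexList, Pi.add_apply]
    rfl
  map_smul' c w := by
    ext m x
    rw [Pi.smul_apply, Pi.smul_apply, ← map_smul]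
    refine shuffleSum_finRange_congr fun φ ψ ↦ ?_
    simp only [evalOnVertices_vertexList, Pi.smul_apply]
    rfl

variable (w w' : SimplicialCochain (sprod X T) k) (x : X _⦋m⦌) (t : T _⦋n⦌)

lemma slant_apply : slant t w m x =
    shuffleSum (List.finRange (m + 1)) (List.finRange (n + 1)) (evalOnVertices w x t) := rfl

lemma shuffleSum_ofFn_evalOnVertices {a b : ℕ} (φ : ⦋a⦌ ⟶ ⦋m⦌) (ψ : ⦋b⦌ ⟶ ⦋n⦌) :
    shuffleSum (List.ofFn φ) (List.ofFn ψ) (evalOnVertices w x t) =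
      slant (T.map ψ.op t) w a (X.map φ.op x) := by
  rw [List.ofFn_eq_map, List.ofFn_eq_map, shuffleSum_map]
  refine shuffleSum_finRange_congr fun φ' ψ' ↦ ?_
  simp only [map_prodMap_vertexList, evalOnVertices_vertexList, op_comp, X.map_comp_apply,
    T.map_comp_apply]

lemma evaluatesOn_shuffleSum_left :
    EvaluatesOn (fun l ↦ shuffleSum l (List.finRange (n + 1)) (evalOnVertices w x t))
      (slant t w) x := fun i φ ↦ by
  have := shuffleSum_ofFn_evalOnVertices w x t φ (𝟙 ⦋n⦌)
  rwa [op_id, T.map_id_apply] at this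

lemma evaluatesOn_shuffleSum_right :
    EvaluatesOn (fun l ↦ shuffleSum (List.finRange (m + 1)) l (evalOnVertices w x t))
      (fun _ t ↦ slant t w m x) t := fun i ψ ↦ by
  have := shuffleSum_ofFn_evalOnVertices w x t (𝟙 ⦋m⦌) ψ
  rwa [op_id, X.map_id_apply] at this

theorem slant_coboundary : slant t w.coboundary m x =
    (slant t w).coboundary m x +
      (-1) ^ m * SimplicialCochain.coboundary (fun _ t ↦ slant t w m x) n t := by
  rw [slant_apply, shuffleSum_finRange_congr (evalOnVertices_coboundary w x t),
    shuffleSum_listCoboundary,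
    (evaluatesOn_shuffleSum_left w x t).listCoboundary_finRange (by simp),
    (evaluatesOn_shuffleSum_right w x t).listCoboundary_finRange (by simp),
    evalOnVertices_nil, List.length_finRange]
  simp only [ite_self, add_zero, pow_succ]
  ring

theorem slant_cup : slant t (w.cup w') m x =
    ∑ q : Fin (n + 1), ∑ p : Fin (m + 1), (-1) ^ (q * (m - p) : ℕ) *
      (slant (T.map (frontHom q n q.is_le).op t) w p (X.map (frontHom p m p.is_le).op x) *
        slant (T.map (backHom (n - q) n (n.sub_le q)).op t) w' (m - p)
          (X.map (backHom (m - p) m (m.sub_le p)).op x)) := by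
  rw [slant_apply, shuffleSum_finRange_congr (evalOnVertices_cup w w' x t), shuffleSum_listCup,
    Finset.sum_comm, List.length_finRange, List.length_finRange, Finset.sum_range]
  simp only [Finset.sum_range, Nat.add_sub_cancel]
  refine Finset.sum_congr rfl fun q _ ↦ Finset.sum_congr rfl fun p _ ↦ ?_
  rw [take_finRange p.is_le, take_finRange q.is_le, drop_finRange p.is_le, drop_finRange q.is_le,
    shuffleSum_ofFn_evalOnVertices, shuffleSum_ofFn_evalOnVertices]

variable {w} in
lemma slant_apply_eq_zero (hw : ∀ y, w (m + n) y = 0) : slant t w m x = 0 :=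
  (shuffleSum_finRange_congr fun φ ψ ↦ (evalOnVertices_vertexList w x t φ ψ).trans (hw _)).trans
    (map_zero _)

lemma slant_vertex (t : T _⦋0⦌) :
    slant t w m x = w m (x, T.map (SimplexCategory.const ⦋m⦌ ⦋0⦌ 0).op t) := by
  have h : (List.finRange (m + 1)).map (fun i ↦ (i, (0 : Fin 1))) =
      vertexList (𝟙 ⦋m⦌) (SimplexCategory.const ⦋m⦌ ⦋0⦌ 0) := by
    rw [vertexList_eq_map]
    rfl
  refine ((shuffleSum_singleton_right (by simp) _ _).trans (congrArg _ h)).trans ?_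
  rw [evalOnVertices_vertexList, op_id, X.map_id_apply]

lemma not_isChain_ne_ofFn_σ (i : Fin (n + 1)) :
    ¬ (List.ofFn (α := Fin (n + 1)) (SimplexCategory.σ i)).IsChain (· ≠ ·) := by
  rw [List.isChain_ofFn]
  intro h
  refine h i (Nat.succ_lt_succ i.isLt) ?_
  change i.predAbove i.castSucc = i.predAbove i.succ
  simp

variable {w}

lemma isNormalized_slant (hw : w.IsNormalized) : (slant t w).IsNormalized := fun n' i x ↦ by
  rw [← evaluatesOn_shuffleSum_left w x t]
  exact shuffleSum_eq_zero fun l hl ↦ evalOnVertices_eq_zero_of_not_isChain x t hw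
    fun h ↦ not_isChain_ne_ofFn_σ i (hl.isChain_ne_fst h)

lemma slant_σ (hw : w.IsNormalized) (i : Fin (n + 1)) :
    slant (T.map (SimplexCategory.σ i).op t) w = 0 := by
  ext m x
  refine (evaluatesOn_shuffleSum_right w x t _ _).symm.trans ?_
  exact shuffleSum_eq_zero fun l hl ↦ evalOnVertices_eq_zero_of_not_isChain x t hw
    fun h ↦ not_isChain_ne_ofFn_σ i (hl.isChain_ne_snd h)

end Slant

/-! ## Presentations of the cochain algebra -/

namespace IsCochainPresentation

universe u

variable {k : Type} [CommRing k] {X Y : SSet.{u}} {CX CY : DGA k}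

lemma exists_coe_eq {E : CX.A → SimplicialCochain X k} (hE : IsCochainPresentation X CX E) :
    ∃ L : CX.A →ₗ[k] SimplicialCochain X k, ⇑L = E :=
  ⟨{ toFun := E
     map_add' := fun a b ↦ funext₂ (hE.1 a b)
     map_smul' := fun c a ↦ funext₂ (hE.2.1 c a) }, rfl⟩

variable {E : CX.A →ₗ[k] SimplicialCochain X k} {a b : CX.A} {i j : ℤ} {n : ℕ}

lemma isNormalized (hE : IsCochainPresentation X CX E) (a : CX.A) : (E a).IsNormalized := by
  obtain ⟨-, -, h, -⟩ := hE
  exact h a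

lemma eq_zero_of_degree_neg (hE : IsCochainPresentation X CX E) (ha : a ∈ CX.gr i) (hi : i < 0) :
    a = 0 := by
  obtain ⟨-, -, -, h, -⟩ := hE
  simpa [h i hi] using ha

lemma apply_eq_zero (hE : IsCochainPresentation X CX E) (ha : a ∈ CX.gr i) (hn : (n : ℤ) ≠ i) :
    E a n = 0 := by
  obtain ⟨-, -, -, -, h, -⟩ := hE
  exact funext fun x ↦ h i a ha n x hn

lemma apply_decompose (hE : IsCochainPresentation X CX E) (a : CX.A) (n : ℕ) :
    E (decompose CX.gr a n : CX.A) n = E a n := by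
  induction a using DirectSum.Decomposition.inductionOn CX.gr with
  | zero => simp
  | @homogeneous i a =>
    obtain rfl | hi := eq_or_ne i n
    · rw [decompose_of_mem_same CX.gr a.2]
    · rw [decompose_of_mem_ne CX.gr a.2 hi, hE.apply_eq_zero a.2 hi.symm, map_zero, Pi.zero_apply]
  | add a b ha hb => simp [ha, hb]

lemma injective (hE : IsCochainPresentation X CX E) : Function.Injective E := by
  refine (injective_iff_map_eq_zero E).2 fun a ha ↦ ?_
  have hcomponent : ∀ i, (decompose CX.gr a i : CX.A) = 0 := by
    intro i
    refine hE.2.2.2.2.2.1 i _ (SetLike.coe_mem _) fun n x ↦ ?_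
    obtain rfl | hn := eq_or_ne (n : ℤ) i
    · rw [hE.apply_decompose, ha]
      rfl
    · rw [hE.apply_eq_zero (SetLike.coe_mem _) hn]
      rfl
  classical
  rw [← sum_support_decompose CX.gr a]
  exact Finset.sum_eq_zero fun i _ ↦ hcomponent i

lemma mem_gr (hE : IsCochainPresentation X CX E) (h : ∀ n : ℕ, (n : ℤ) ≠ i → E a n = 0) :
    a ∈ CX.gr i := by
  have ha : (decompose CX.gr a i : CX.A) = a := by
    refine hE.injective (funext fun n ↦ ?_)
    obtain rfl | hn := eq_or_ne (n : ℤ) i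
    · exact hE.apply_decompose a n
    · rw [h n hn, hE.apply_eq_zero (SetLike.coe_mem _) hn]
  exact ha ▸ SetLike.coe_mem _

lemma exists_forall_ge_apply_eq_zero (hE : IsCochainPresentation X CX E) (a : CX.A) :
    ∃ N : ℕ, ∀ n ≥ N, E a n = 0 := by
  induction a using DirectSum.Decomposition.inductionOn CX.gr with
  | zero => simp
  | @homogeneous i a => exact ⟨i.toNat + 1, fun n hn ↦ hE.apply_eq_zero a.2 (by omega)⟩
  | add a b ha hb =>
    obtain ⟨M, hM⟩ := ha
    obtain ⟨N, hN⟩ := hb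
    refine ⟨max M N, fun n hn ↦ ?_⟩
    rw [map_add, Pi.add_apply, hM n (le_of_max_le_left hn), hN n (le_of_max_le_right hn), add_zero]

lemma exists_homogeneous_eq (hE : IsCochainPresentation X CX E) {w : SimplicialCochain X k}
    (hw : w.IsNormalized) (n : ℕ) : ∃ a ∈ CX.gr n, E a n = w n := by
  obtain ⟨-, -, -, -, -, -, h₀, h, -⟩ := hE
  obtain _ | n := n
  · obtain ⟨a, ha, haw⟩ := h₀ (w 0)
    exact ⟨a, ha, funext haw⟩
  · obtain ⟨a, ha, haw⟩ := h n (w (n + 1)) (hw n)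
    exact ⟨a, mod_cast ha, funext haw⟩

lemma exists_apply_eq (hE : IsCochainPresentation X CX E) {w : SimplicialCochain X k}
    (hw : w.IsNormalized) (hbdd : ∃ N : ℕ, ∀ n ≥ N, w n = 0) : ∃ a, E a = w := by
  choose a ha haw using hE.exists_homogeneous_eq hw
  obtain ⟨N, hN⟩ := hbdd
  refine ⟨∑ m ∈ Finset.range N, a m, funext fun n ↦ ?_⟩
  rw [map_sum, Finset.sum_apply]
  obtain hn | hn := lt_or_ge n N
  · rw [Finset.sum_eq_single n _ (by simp [hn]), haw]
    exact fun m _ hm ↦ hE.apply_eq_zero (ha m) (mod_cast hm.symm)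
  · rw [hN n hn]
    refine Finset.sum_eq_zero fun m hm ↦ hE.apply_eq_zero (ha m) ?_
    have := Finset.mem_range.1 hm
    omega

lemma apply_one (hE : IsCochainPresentation X CX E) : E 1 = SimplicialCochain.unit := by
  obtain ⟨-, -, -, -, -, -, -, -, h₀, h, -⟩ := hE
  ext n x
  cases n
  · exact h₀ x
  · exact h _ x

lemma apply_mul_of_mem (hE : IsCochainPresentation X CX E) (ha : a ∈ CX.gr i) (hb : b ∈ CX.gr j) :
    E (a * b) = (E a).cup (E b) := by
  ext n x
  by_cases h : ∃ p : Fin (n + 1), (p : ℤ) = i ∧ ((n - p : ℕ) : ℤ) = j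
  · obtain ⟨⟨p, hp⟩, rfl, rfl⟩ := h
    obtain ⟨q, rfl⟩ := Nat.exists_eq_add_of_le (Nat.le_of_lt_succ hp)
    have hback : ∀ (q' : ℕ) (hq : q' = q), E b q' (X.map (backHom q' (p + q) (by omega)).op x) =
        E b q (X.map (backHom q (p + q) (by omega)).op x) := by rintro _ rfl; rfl
    rw [SimplicialCochain.cup, Finset.sum_eq_single ⟨p, hp⟩ _ (by simp)]
    · rw [hback _ (Nat.add_sub_cancel_left p q)]
      exact hE.2.2.2.2.2.2.2.2.2.2.1 p q a ha b (by simpa using hb) x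
    · intro r _ hr
      rw [hE.apply_eq_zero ha (mod_cast Fin.val_ne_of_ne hr), Pi.zero_apply, zero_mul]
  · have hmul : E (a * b) n = 0 := by
      obtain hn | hn := eq_or_ne (n : ℤ) (i + j)
      · obtain hi | hj : i < 0 ∨ j < 0 := by
          by_contra! hij
          exact h ⟨⟨i.toNat, by omega⟩, by simp only; omega, by simp only; omega⟩
        · simp [hE.eq_zero_of_degree_neg ha hi]
        · simp [hE.eq_zero_of_degree_neg hb hj]
      · exact hE.apply_eq_zero (SetLike.mul_mem_graded ha hb) hn
    rw [hmul]
    refine (Finset.sum_eq_zero fun p _ ↦ ?_).symm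
    obtain hp | hp := not_and_or.1 fun hp ↦ h ⟨p, hp⟩
    · rw [hE.apply_eq_zero ha hp, Pi.zero_apply, zero_mul]
    · rw [hE.apply_eq_zero hb hp, Pi.zero_apply, mul_zero]

lemma apply_mul (hE : IsCochainPresentation X CX E) (a b : CX.A) :
    E (a * b) = (E a).cup (E b) := by
  induction a using DirectSum.Decomposition.inductionOn CX.gr with
  | zero => ext; simp [SimplicialCochain.cup]
  | homogeneous a =>
    induction b using DirectSum.Decomposition.inductionOn CX.gr with
    | zero => ext; simp [SimplicialCochain.cup]
    | homogeneous b => exact hE.apply_mul_of_mem a.2 b.2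
    | add b b' hb hb' =>
      ext
      simp [mul_add, hb, hb', SimplicialCochain.cup, Finset.sum_add_distrib]
  | add a a' ha ha' =>
    ext
    simp [add_mul, ha, ha', SimplicialCochain.cup, Finset.sum_add_distrib]

lemma apply_d (hE : IsCochainPresentation X CX E) (a : CX.A) :
    E (CX.d a) = (E a).coboundary := by
  induction a using DirectSum.Decomposition.inductionOn CX.gr with
  | zero => ext n; cases n <;> simp [SimplicialCochain.coboundary]
  | @homogeneous i a =>
    ext n x
    obtain _ | n := n
    · obtain hi | hi := eq_or_ne i (-1)
      · simp [hE.eq_zero_of_degree_neg a.2 (by omega), SimplicialCochain.coboundary]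
      · rw [hE.apply_eq_zero (CX.d_mem i a a.2) (by push_cast; omega)]
        rfl
    · obtain rfl | hn := eq_or_ne (n : ℤ) i
      · rw [hE.2.2.2.2.2.2.2.2.2.2.2 n a a.2]
        simp [SimplicialCochain.coboundary]
      · rw [hE.apply_eq_zero (CX.d_mem i a a.2) (by push_cast; omega)]
        simp [SimplicialCochain.coboundary, hE.apply_eq_zero a.2 hn]
  | add a b ha hb =>
    ext n
    cases n <;> simp [ha, hb, SimplicialCochain.coboundary, mul_add, Finset.sum_add_distrib]

end IsCochainPresentation

section Interval

variable {m n : ℕ}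

/-- The identification of the simplex of `SimplexCategory.toTop` with `TopSimplex n`. -/
def toTopSimplex (n : ℕ) : C((SimplexCategory.toTop.{0}.obj ⦋n⦌ : TopCat), TopSimplex n) where
  toFun s := ⟨s.down.1, s.down.2⟩
  continuous_toFun := (continuous_subtype_val.comp continuous_uliftDown).subtype_mk _

lemma toTopSimplex_map (θ : ⦋m⦌ ⟶ ⦋n⦌)
    (s : (SimplexCategory.toTop.{0}.obj ⦋m⦌ : TopCat)) :
    toTopSimplex n (SimplexCategory.toTop.{0}.map θ s) = vertAffine θ (toTopSimplex m s) :=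
  Subtype.ext <| funext fun j ↦ FunOnFinite.linearMap_apply_apply ℝ ℝ _ _ j

/-- The simplex of `Iset` given by a singular simplex of `[0, 1]`. -/
noncomputable def isetSimplex (τ : SingN unitInterval n) : Iset _⦋n⦌ :=
  ULift.up (TopCat.ofHom (ContinuousMap.comp τ (toTopSimplex n)))

lemma isetSimplex_comp_vertAffine (θ : ⦋m⦌ ⟶ ⦋n⦌) (τ : SingN unitInterval n) :
    isetSimplex (ContinuousMap.comp τ (vertAffine θ) : SingN unitInterval m) =
      Iset.map θ.op (isetSimplex τ) := by
  refine ULift.down_injective (ConcreteCategory.hom_ext _ _ fun s ↦ ?_)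
  exact congrArg (DFunLike.coe (F := C(TopSimplex n, unitInterval)) τ) (toTopSimplex_map θ s).symm

end Interval

/-! ## The homotopy -/

section SlantPullback

open SimplicialCochain

universe u v

variable {k : Type} [CommRing k] {X : SSet.{u}} {T : SSet.{v}} {Y : SSet.{max u v}} {CX CY : DGA k}
  {EX : CX.A →ₗ[k] SimplicialCochain X k} {EY : CY.A →ₗ[k] SimplicialCochain Y k}
  {h : sprod X T ⟶ Y} {H : CY.A → ∀ n : ℕ, T _⦋n⦌ → CX.A}

/-- `H a n t` is the slant product of the pullback of `a` along `h : X × T ⟶ Y` with the simplex `t`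
of `T`, the elements of `CX` and `CY` being regarded as cochains through `EX` and `EY`. -/
def IsSlantPullback (h : sprod X T ⟶ Y) (EX : CX.A →ₗ[k] SimplicialCochain X k)
    (EY : CY.A →ₗ[k] SimplicialCochain Y k) (H : CY.A → ∀ n : ℕ, T _⦋n⦌ → CX.A) : Prop :=
  ∀ (a : CY.A) (n : ℕ) (t : T _⦋n⦌), EX (H a n t) = slant t (comap h (EY a))

lemma exists_isSlantPullback (hX : IsCochainPresentation X CX EX)
    (hY : IsCochainPresentation Y CY EY) (h : sprod X T ⟶ Y) :
    ∃ H, IsSlantPullback h EX EY H := by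
  have hex : ∀ (a : CY.A) (n : ℕ) (t : T _⦋n⦌), ∃ c, EX c = slant t (comap h (EY a)) := by
    intro a n t
    refine hX.exists_apply_eq (isNormalized_slant t ((hY.isNormalized a).comap h)) ?_
    obtain ⟨N, hN⟩ := hY.exists_forall_ge_apply_eq_zero a
    refine ⟨N, fun m hm ↦ funext fun x ↦ slant_apply_eq_zero x t fun y ↦ ?_⟩
    rw [comap_apply, hN _ (hm.trans (Nat.le_add_right m n))]
    rfl
  choose H hH using hex
  exact ⟨H, hH⟩

namespace IsSlantPullback

lemma map_add (hH : IsSlantPullback h EX EY H) (hX : IsCochainPresentation X CX EX)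
    (a b : CY.A) (n : ℕ) (t : T _⦋n⦌) : H (a + b) n t = H a n t + H b n t :=
  hX.injective <| by simp [hH _ _ _]

lemma map_smul (hH : IsSlantPullback h EX EY H) (hX : IsCochainPresentation X CX EX)
    (c : k) (a : CY.A) (n : ℕ) (t : T _⦋n⦌) : H (c • a) n t = c • H a n t :=
  hX.injective <| by simp [hH _ _ _]

lemma apply_σ (hH : IsSlantPullback h EX EY H) (hX : IsCochainPresentation X CX EX)
    (hY : IsCochainPresentation Y CY EY) (a : CY.A) {n : ℕ} (i : Fin (n + 1)) (t : T _⦋n⦌) :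
    H a (n + 1) (T.map (SimplexCategory.σ i).op t) = 0 :=
  hX.injective <| by rw [hH, slant_σ t ((hY.isNormalized a).comap h), _root_.map_zero]

lemma mem_gr (hH : IsSlantPullback h EX EY H) (hX : IsCochainPresentation X CX EX)
    (hY : IsCochainPresentation Y CY EY) {i : ℤ} {a : CY.A} (ha : a ∈ CY.gr i) {n : ℕ}
    (t : T _⦋n⦌) : H a n t ∈ CX.gr (i - n) := by
  refine hX.mem_gr fun m hm ↦ funext fun x ↦ ?_
  rw [hH]
  refine slant_apply_eq_zero x t fun y ↦ ?_
  rw [comap_apply, hY.apply_eq_zero ha (by push_cast; omega)]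
  rfl

lemma one_zero (hH : IsSlantPullback h EX EY H) (hX : IsCochainPresentation X CX EX)
    (hY : IsCochainPresentation Y CY EY) (t : T _⦋0⦌) : H 1 0 t = 1 :=
  hX.injective <| by
    ext m x
    rw [hH, slant_vertex, hX.apply_one, hY.apply_one]
    rfl

lemma one_succ (hH : IsSlantPullback h EX EY H) (hX : IsCochainPresentation X CX EX)
    (hY : IsCochainPresentation Y CY EY) {n : ℕ} (t : T _⦋n + 1⦌) : H 1 (n + 1) t = 0 :=
  hX.injective <| by
    ext m x
    rw [hH, hY.apply_one, _root_.map_zero]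
    exact slant_apply_eq_zero x t fun y ↦ (comap_apply h _ _ y).trans (if_neg (by omega))

lemma mul (hH : IsSlantPullback h EX EY H) (hX : IsCochainPresentation X CX EX)
    (hY : IsCochainPresentation Y CY EY) (a : CY.A) {j : ℤ} {b : CY.A} (hb : b ∈ CY.gr j) {n : ℕ}
    (t : T _⦋n⦌) :
    H (a * b) n t = ∑ q : Fin (n + 1),
      (((-1 : ℤˣ) ^ (((q : ℕ) : ℤ) * (j - ((n : ℤ) - ((q : ℕ) : ℤ)))) : ℤˣ) : ℤ) •
        (H a q (T.map (frontHom q n q.is_le).op t) *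
          H b (n - q) (T.map (backHom (n - q) n (n.sub_le q)).op t)) := by
  refine hX.injective (funext₂ fun m x ↦ ?_)
  rw [hH, hY.apply_mul, ← cup_comap, slant_cup, map_sum, Finset.sum_apply, Finset.sum_apply]
  refine Finset.sum_congr rfl fun q _ ↦ ?_
  rw [map_zsmul, hX.apply_mul, Pi.smul_apply, Pi.smul_apply, cup, Finset.smul_sum]
  refine Finset.sum_congr rfl fun p _ ↦ ?_
  rw [← hH, ← hH]
  obtain hdeg | hdeg := eq_or_ne ((m - p : ℕ) : ℤ) (j - ((n : ℤ) - ((q : ℕ) : ℤ)))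
  · rw [← hdeg, ← Nat.cast_mul, zpow_natCast]
    simp
  · rw [hX.apply_eq_zero (hH.mem_gr hX hY hb _) (by rwa [Nat.cast_sub q.is_le])]
    simp

lemma d_zero (hH : IsSlantPullback h EX EY H) (hX : IsCochainPresentation X CX EX)
    (hY : IsCochainPresentation Y CY EY) (a : CY.A) (t : T _⦋0⦌) :
    H (CY.d a) 0 t = CX.d (H a 0 t) :=
  hX.injective <| by
    ext m x
    rw [hH, hY.apply_d, ← coboundary_comap, slant_coboundary, hX.apply_d, hH]
    exact (congrArg _ (mul_zero _)).trans (add_zero _)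

lemma d_succ (hH : IsSlantPullback h EX EY H) (hX : IsCochainPresentation X CX EX)
    (hY : IsCochainPresentation Y CY EY) {i : ℤ} {a : CY.A} (ha : a ∈ CY.gr i) {n : ℕ}
    (t : T _⦋n + 1⦌) :
    H (CY.d a) (n + 1) t = CX.d (H a (n + 1) t) +
      (((-1 : ℤˣ) ^ (i - (n : ℤ)) : ℤˣ) : ℤ) •
        ∑ r : Fin (n + 2), (((-1 : ℤˣ) ^ (r : ℕ) : ℤˣ) : ℤ) •
          H a n (T.map (SimplexCategory.δ r).op t) := by
  refine hX.injective (funext₂ fun m x ↦ ?_)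
  rw [hH, hY.apply_d, ← coboundary_comap, slant_coboundary, _root_.map_add, hX.apply_d, hH]
  refine congrArg _ ?_
  simp only [coboundary, map_zsmul, map_sum, Pi.smul_apply, Finset.sum_apply, ← hH _ _ _]
  obtain hdeg | hdeg := eq_or_ne (m : ℤ) (i - n)
  · simp [← hdeg]
  · simp [hX.apply_eq_zero (hH.mem_gr hX hY ha _) hdeg]

end IsSlantPullback

end SlantPullback

section CochainMaps

open SimplicialCochain

universe u

variable {k : Type} [CommRing k] {X Y : SSet.{u}} {CX CY : DGA k}
  {EX : CX.A →ₗ[k] SimplicialCochain X k} {EY : CY.A →ₗ[k] SimplicialCochain Y k} {f g : X ⟶ Y}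

lemma IsPullbackHom.apply_eq {φ : DGAHom CY CX} (hφ : IsPullbackHom f EY EX φ) (a : CY.A) :
    EX (φ.toFun a) = comap f (EY a) :=
  funext₂ (hφ a)

lemma IsPullbackHom.unique (hX : IsCochainPresentation X CX EX) {φ ψ : DGAHom CY CX}
    (hφ : IsPullbackHom f EY EX φ) (hψ : IsPullbackHom f EY EX ψ) : φ = ψ := by
  cases φ
  cases ψ
  congr
  ext a
  exact hX.injective ((hφ.apply_eq a).trans (hψ.apply_eq a).symm)

lemma exists_linearMap_comap (hX : IsCochainPresentation X CX EX)
    (hY : IsCochainPresentation Y CY EY) (f : X ⟶ Y) :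
    ∃ φ : CY.A →ₗ[k] CX.A, ∀ a, EX (φ a) = comap f (EY a) := by
  have hex : ∀ a, ∃ c, EX c = comap f (EY a) := by
    intro a
    refine hX.exists_apply_eq ((hY.isNormalized a).comap f) ?_
    obtain ⟨N, hN⟩ := hY.exists_forall_ge_apply_eq_zero a
    exact ⟨N, fun n hn ↦ funext fun x ↦ congrFun (hN n hn) _⟩
  choose φ hφ using hex
  exact ⟨{
    toFun := φ
    map_add' := fun a b ↦ hX.injective (by simp [hφ])
    map_smul' := fun c a ↦ hX.injective (by simp [hφ]) }, hφ⟩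

lemma exists_isPullbackHom (hX : IsCochainPresentation X CX EX)
    (hY : IsCochainPresentation Y CY EY) (f : X ⟶ Y) :
    ∃ φ : DGAHom CY CX, IsPullbackHom f EY EX φ := by
  obtain ⟨φ, hφ⟩ := exists_linearMap_comap hX hY f
  have hone : φ 1 = 1 := hX.injective <| by
    rw [hφ, hX.apply_one, hY.apply_one]
    rfl
  have hmul : ∀ a b, φ (a * b) = φ a * φ b := fun a b ↦ hX.injective <| by
    rw [hX.apply_mul, hφ, hφ, hφ, hY.apply_mul, cup_comap]
  exact ⟨{
    toFun := AlgHom.ofLinearMap φ hone hmul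
    map_gr := fun i a ha ↦ hX.mem_gr fun n hn ↦ funext fun x ↦
      (congrFun₂ (hφ a) n x).trans (congrFun (hY.apply_eq_zero ha hn) _)
    map_d := fun a ↦ hX.injective <| by
      rw [AlgHom.ofLinearMap_apply, AlgHom.ofLinearMap_apply, hX.apply_d, hφ, hφ, hY.apply_d,
        coboundary_comap] },
    fun a n x ↦ congrFun₂ (hφ a) n x⟩

lemma isPullbackHom_id (E : CX.A →ₗ[k] SimplicialCochain X k) :
    IsPullbackHom (𝟙 X) E E (DGAHom.id' CX) := fun _ _ _ ↦ rfl

lemma IsPullbackHom.comp {Z : SSet.{u}} {CZ : DGA k} {EZ : CZ.A →ₗ[k] SimplicialCochain Z k}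
    {f : X ⟶ Y} {g : Y ⟶ Z} {φ : DGAHom CY CX} {ψ : DGAHom CZ CY} (hφ : IsPullbackHom f EY EX φ)
    (hψ : IsPullbackHom g EZ EY ψ) : IsPullbackHom (f ≫ g) EZ EX (φ.comp ψ) :=
  fun a n x ↦ (hφ (ψ.toFun a) n x).trans (hψ a n _)

lemma IsSlantPullback.isElemStrongHomotopy {h : sprod X Iset ⟶ Y}
    {H : CY.A → ∀ n : ℕ, Iset _⦋n⦌ → CX.A} (hH : IsSlantPullback h EX EY H)
    (hX : IsCochainPresentation X CX EX) (hY : IsCochainPresentation Y CY EY)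
    {φ₀ φ₁ : DGAHom CY CX} (h₀ : IsPullbackHom (cylIncl0 X ≫ h) EY EX φ₀)
    (h₁ : IsPullbackHom (cylIncl1 X ≫ h) EY EX φ₁) :
    IsElemStrongHomotopy CY CX φ₀.toFun φ₁.toFun fun a n σ ↦ H a n (isetSimplex σ) := by
  refine ⟨fun a b n σ ↦ hH.map_add hX a b n _, fun c a n σ ↦ hH.map_smul hX c a n _,
    fun a n i τ ↦ ?_, fun i a ha n σ ↦ hH.mem_gr hX hY ha _, fun σ ↦ hH.one_zero hX hY _,
    fun n σ ↦ hH.one_succ hX hY _, fun i j a _ b hb n σ ↦ ?_,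
    fun i a ha ↦ ⟨fun σ ↦ hH.d_zero hX hY a _, fun n σ ↦ ?_⟩,
    fun a ↦ ⟨hX.injective ?_, hX.injective ?_⟩⟩
  · exact (congrArg _ (isetSimplex_comp_vertAffine (SimplexCategory.σ i) τ)).trans
      (hH.apply_σ hX hY a i _)
  · refine (hH.mul hX hY a hb _).trans (Finset.sum_congr rfl fun q _ ↦ ?_)
    rw [← isetSimplex_comp_vertAffine, ← isetSimplex_comp_vertAffine]
    rfl
  · refine (hH.d_succ hX hY ha _).trans ?_
    simp only [← isetSimplex_comp_vertAffine]
    rfl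
  · ext m x
    rw [hH, slant_vertex, h₀.apply_eq]
    rfl
  · ext m x
    rw [hH, slant_vertex, h₁.apply_eq]
    rfl

theorem SimpStronglyHomotopic.stronglyHomotopicHoms (hfg : SimpStronglyHomotopic f g)
    (hX : IsCochainPresentation X CX EX) (hY : IsCochainPresentation Y CY EY)
    {φ ψ : DGAHom CY CX} (hφ : IsPullbackHom f EY EX φ) (hψ : IsPullbackHom g EY EX ψ) :
    StronglyHomotopicHoms CY CX φ ψ := by
  induction hfg generalizing φ ψ with
  | rel f g hfg =>
    obtain ⟨h, rfl, rfl⟩ := hfg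
    obtain ⟨H, hH⟩ := exists_isSlantPullback hX hY h
    exact .rel _ _ ⟨_, hH.isElemStrongHomotopy hX hY hφ hψ⟩
  | refl f =>
    obtain rfl := hφ.unique hX hψ
    exact .refl _
  | symm f g _ ih => exact .symm _ _ (ih hψ hφ)
  | trans f g e _ _ ih₁ ih₂ =>
    obtain ⟨χ, hχ⟩ := exists_isPullbackHom hX hY g
    exact .trans _ _ _ (ih₁ hφ hχ) (ih₂ hχ hψ)

end CochainMaps

/-- **Theorem.** Let `f, g : X → Y` be maps of simplicial sets.  If `f` and `g` are
strongly homotopic, then the induced maps of (pseudo-compact) normalized cochain dg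
algebras `f*, g* : C*(Y) → C*(X)` are strongly homotopic.  Consequently, if two
simplicial sets `X` and `Y` are strongly homotopy equivalent, then the dg algebras
`C*(X)` and `C*(Y)` are strongly homotopy equivalent. -/
theorem strongly_homotopic_simplicial_maps_induce_strongly_homotopic_cochain_maps
    {k : Type} [CommRing k] :
    (∀ (X Y : SSet) (f g : X ⟶ Y), SimpStronglyHomotopic f g →
      ∀ (CX CY : DGA k)
        (EX : CX.A → ∀ n : ℕ, X.obj (Opposite.op (SimplexCategory.mk n)) → k)
        (EY : CY.A → ∀ n : ℕ, Y.obj (Opposite.op (SimplexCategory.mk n)) → k),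
        IsCochainPresentation X CX EX → IsCochainPresentation Y CY EY →
        ∀ (φf φg : DGAHom CY CX),
          IsPullbackHom f EY EX φf → IsPullbackHom g EY EX φg →
          StronglyHomotopicHoms CY CX φf φg) ∧
    (∀ (X Y : SSet), SimpStronglyHomotopyEquivalent X Y →
      ∀ (CX CY : DGA k)
        (EX : CX.A → ∀ n : ℕ, X.obj (Opposite.op (SimplexCategory.mk n)) → k)
        (EY : CY.A → ∀ n : ℕ, Y.obj (Opposite.op (SimplexCategory.mk n)) → k),
        IsCochainPresentation X CX EX → IsCochainPresentation Y CY EY →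
        StronglyHomotopyEquivalent CX CY) := by
  refine ⟨fun X Y f g hfg CX CY EX EY hX hY φf φg hφf hφg ↦ ?_,
    fun X Y hXY CX CY EX EY hX hY ↦ ?_⟩
  all_goals
    obtain ⟨EX, rfl⟩ := hX.exists_coe_eq
    obtain ⟨EY, rfl⟩ := hY.exists_coe_eq
  · exact hfg.stronglyHomotopicHoms hX hY hφf hφg
  · obtain ⟨f, g, hgf, hfg⟩ := hXY
    obtain ⟨φ, hφ⟩ := exists_isPullbackHom hX hY f
    obtain ⟨ψ, hψ⟩ := exists_isPullbackHom hY hX g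
    exact ⟨ψ, φ, hgf.stronglyHomotopicHoms hY hY (hψ.comp hφ) (isPullbackHom_id EY),
      hfg.stronglyHomotopicHoms hX hX (hφ.comp hψ) (isPullbackHom_id EX)⟩
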